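/- Let 𝒰 ⊆ B(K₁,L₁) and 𝒱 ⊆ B(H₂,K₂) be ternary rings of operators, let n ∈ ℕ and u₁,…,uₙ ∈ 𝒰, v₁,…,vₙ ∈ 𝒱. Then the supremum of ‖Σ_{i=1}^n φ(u_i) ψ(v_i)‖ over all complex Hilbert spaces H, K, L and all semi-commuting pairs of ternary morphisms φ : 𝒰 → B(K,L), ψ : 𝒱 → B(H,K), equals the supremum of ‖Σ_{i=1}^n φ'(u_i) ψ'(v_i)‖ over all complex Hilbert spaces H' and all commuting pairs of ternary morphisms φ' : 𝒰 → B(H'), ψ' : 𝒱 → B(H'), where a pair (φ',ψ') into B(H') is commuting if φ'(u)ψ'(v) = ψ'(v)φ'(u) and φ'(u)ψ'(v)* = ψ'(v)*φ'(u) for all u ∈ 𝒰, v ∈ 𝒱. (In other words, the maximal tensor norm of TROs coincides with the norm defined via commuting pairs.) -/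

import Mathlib

open ContinuousLinearMap

universe u

/-- A bundled complex Hilbert space. -/
structure HilbertC : Type (u + 1) where
  carrier : Type u
  [nacg : NormedAddCommGroup carrier]
  [ips : InnerProductSpace ℂ carrier]
  [cs : CompleteSpace carrier]

attribute [instance] HilbertC.nacg HilbertC.ips HilbertC.cs

/-- A linear map `φ` on a TRO `𝒰 ⊆ B(K₀, L₀)` is a ternary morphism if it
satisfies `φ(S T* R) = φ(S) φ(T)* φ(R)` for all `S, T, R ∈ 𝒰`. -/
def IsTernaryHom
    {K₀ L₀ K L : Type*}
    [NormedAddCommGroup K₀] [InnerProductSpace ℂ K₀] [CompleteSpace K₀]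
    [NormedAddCommGroup L₀] [InnerProductSpace ℂ L₀] [CompleteSpace L₀]
    [NormedAddCommGroup K] [InnerProductSpace ℂ K] [CompleteSpace K]
    [NormedAddCommGroup L] [InnerProductSpace ℂ L] [CompleteSpace L]
    (𝒰 : Submodule ℂ (K₀ →L[ℂ] L₀)) (φ : ↥𝒰 →ₗ[ℂ] (K →L[ℂ] L)) : Prop :=
  ∀ (s t r : 𝒰)
    (h : (s : K₀ →L[ℂ] L₀) ∘L (adjoint (t : K₀ →L[ℂ] L₀)) ∘L (r : K₀ →L[ℂ] L₀) ∈ 𝒰),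
    φ ⟨(s : K₀ →L[ℂ] L₀) ∘L (adjoint (t : K₀ →L[ℂ] L₀)) ∘L (r : K₀ →L[ℂ] L₀), h⟩
      = φ s ∘L (adjoint (φ t)) ∘L φ r

/-!
Only the passage from a semi-commuting pair `(φ, ψ)` to a commuting one needs an argument. The idea
is to complete `φ` and `ψ` to a square

```
       ψ
   H ────→ K
 A │       │ φ
   ↓       ↓
   G ────→ L
       B
```

of ternary morphisms satisfying `φ(u) ψ(v) = B(v) A(u)` and `A(u) ψ(v)* = B(v)* φ(u)`. Then
`φ ⊕ A` and `ψ ⊕ B`, acting as off-diagonal operators on `H ⊕ K ⊕ L ⊕ G`, commute, and their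
products are the corner operators `φ(u) ψ(v) : H → L`, so no norm changes.

The space `G` is spanned by symbols `φ(u) ⊗ ψ(v)* ⊗ k` with Gram operators
`φ(u)*φ(u') ψ(v)ψ(v')*`; this kernel is positive because a positive matrix whose entries commute
with `φ(u)*φ(u')` has a square root with the same property. Then `A(u)` sends `ψ(v)* k` to
`φ(u) ⊗ ψ(v)* ⊗ k`, and `B(v)*` sends `φ(u) k` to the same vector.
-/

open scoped InnerProduct InnerProductSpace

section Corner

variable {𝕜 ι : Type*} [RCLike 𝕜] [Fintype ι] {E : ι → Type*} [∀ i, NormedAddCommGroup (E i)]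
  [∀ i, InnerProductSpace 𝕜 (E i)] [∀ i, CompleteSpace (E i)]

theorem adjoint_piLp_proj_apply [DecidableEq ι] (i : ι) (z : E i) :
    ((PiLp.proj (𝕜 := 𝕜) 2 E i)†) z = PiLp.single 2 i z := by
  refine ext_inner_left 𝕜 fun w => ?_
  rw [adjoint_inner_right, PiLp.inner_apply, Finset.sum_eq_single i] <;> simp +contextual

theorem piLp_proj_comp_adjoint_self (i : ι) :
    PiLp.proj (𝕜 := 𝕜) 2 E i ∘L (PiLp.proj 2 E i)† = 1 := by
  classical
  ext z
  simp [adjoint_piLp_proj_apply]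

theorem piLp_proj_comp_adjoint_of_ne {i j : ι} (h : i ≠ j) :
    PiLp.proj (𝕜 := 𝕜) 2 E i ∘L (PiLp.proj 2 E j)† = 0 := by
  classical
  ext z
  simp [adjoint_piLp_proj_apply, h]

theorem sum_adjoint_piLp_proj_comp_proj :
    ∑ i, (PiLp.proj (𝕜 := 𝕜) 2 E i)† ∘L PiLp.proj 2 E i = 1 := by
  ext1 z
  refine ext_inner_left 𝕜 fun w => ?_
  simp [sum_apply, inner_sum, adjoint_inner_right, PiLp.inner_apply]

theorem norm_adjoint_piLp_proj_comp {F : Type*} [NormedAddCommGroup F] [NormedSpace 𝕜 F] (i : ι)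
    (g : F →L[𝕜] E i) : ‖(PiLp.proj (𝕜 := 𝕜) 2 E i)† ∘L g‖ = ‖g‖ := by
  let incl : E i →ₗᵢ[𝕜] PiLp 2 E :=
    ⟨((PiLp.proj 2 E i)†).toLinearMap,
      (norm_map_iff_adjoint_comp_self _).2 (by rw [adjoint_adjoint, piLp_proj_comp_adjoint_self])⟩
  exact incl.norm_toContinuousLinearMap_comp

/-- The operator on the Hilbert sum `⨁ᵢ E i` which acts as `f : E a → E b` on the summand `E a`
and vanishes on all other summands. -/
noncomputable def corner (a b : ι) :
    (E a →L[𝕜] E b) →ₗ[𝕜] (PiLp 2 E →L[𝕜] PiLp 2 E) where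
  toFun f := (PiLp.proj 2 E b)† ∘L f ∘L PiLp.proj 2 E a
  map_add' f g := by rw [add_comp, comp_add]
  map_smul' c f := by rw [smul_comp, comp_smul, RingHom.id_apply]

theorem corner_apply (a b : ι) (f : E a →L[𝕜] E b) :
    corner a b f = (PiLp.proj 2 E b)† ∘L f ∘L PiLp.proj 2 E a := rfl

theorem adjoint_corner (a b : ι) (f : E a →L[𝕜] E b) : (corner a b f)† = corner b a (f†) := by
  simp only [corner_apply, adjoint_comp, adjoint_adjoint, comp_assoc]

theorem corner_comp_corner (a b c : ι) (g : E b →L[𝕜] E c) (f : E a →L[𝕜] E b) :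
    corner b c g ∘L corner a b f = corner a c (g ∘L f) :=
  calc corner b c g ∘L corner a b f
      = (PiLp.proj 2 E c)† ∘L g ∘L (PiLp.proj 2 E b ∘L (PiLp.proj 2 E b)†) ∘L f ∘L
          PiLp.proj 2 E a := by simp only [corner_apply, comp_assoc]
    _ = corner a c (g ∘L f) := by
        rw [piLp_proj_comp_adjoint_self, one_def, id_comp, corner_apply, comp_assoc]

theorem corner_comp_corner_of_ne {b b' : ι} (h : b' ≠ b) (a c : ι) (g : E b' →L[𝕜] E c)
    (f : E a →L[𝕜] E b) : corner b' c g ∘L corner a b f = 0 :=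
  calc corner b' c g ∘L corner a b f
      = (PiLp.proj 2 E c)† ∘L g ∘L (PiLp.proj 2 E b' ∘L (PiLp.proj 2 E b)†) ∘L f ∘L
          PiLp.proj 2 E a := by simp only [corner_apply, comp_assoc]
    _ = 0 := by simp only [piLp_proj_comp_adjoint_of_ne h, zero_comp, comp_zero]

theorem norm_corner (a b : ι) (f : E a →L[𝕜] E b) : ‖corner a b f‖ = ‖f‖ :=
  calc ‖corner a b f‖ = ‖(f ∘L PiLp.proj 2 E a)†‖ := by
        rw [corner_apply, norm_adjoint_piLp_proj_comp, LinearIsometryEquiv.norm_map]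
    _ = ‖f‖ := by rw [adjoint_comp, norm_adjoint_piLp_proj_comp, LinearIsometryEquiv.norm_map]

end Corner

section GramFactorization

variable {K L H ι : Type*}
  [NormedAddCommGroup K] [InnerProductSpace ℂ K] [NormedAddCommGroup L] [InnerProductSpace ℂ L]
  [NormedAddCommGroup H] [InnerProductSpace ℂ H] [Fintype ι]

/-- The operator `(k a)ₐ ↦ ∑ₐ S a (k a)` on the Hilbert sum of copies of `K`. -/
noncomputable def rowOperator (S : ι → K →L[ℂ] H) : PiLp 2 (fun _ : ι => K) →L[ℂ] H :=
  ∑ a, S a ∘L PiLp.proj 2 _ a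

variable [CompleteSpace K]

theorem rowOperator_comp_adjoint_proj (S : ι → K →L[ℂ] H) (a : ι) :
    rowOperator S ∘L (PiLp.proj 2 (fun _ : ι => K) a)† = S a := by
  simp only [rowOperator, finsetSum_comp, comp_assoc]
  rw [Finset.sum_eq_single a, piLp_proj_comp_adjoint_self, one_def, comp_id]
  · intro b _ hb
    rw [piLp_proj_comp_adjoint_of_ne hb, comp_zero]
  · simp

/-- The operator acting as `m` in each coordinate of the Hilbert sum of copies of `K`. -/
noncomputable def diagonalOperator (ι : Type*) [Fintype ι] (m : K →L[ℂ] K) :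
    PiLp 2 (fun _ : ι => K) →L[ℂ] PiLp 2 (fun _ : ι => K) :=
  ∑ a, corner (E := fun _ : ι => K) a a m

theorem proj_comp_diagonalOperator (m : K →L[ℂ] K) (a : ι) :
    PiLp.proj 2 (fun _ : ι => K) a ∘L diagonalOperator ι m = m ∘L PiLp.proj 2 _ a := by
  simp only [diagonalOperator, corner_apply, comp_finsetSum, ← comp_assoc]
  rw [Finset.sum_eq_single a, piLp_proj_comp_adjoint_self, one_def, id_comp]
  · intro b _ hb
    rw [piLp_proj_comp_adjoint_of_ne hb.symm, zero_comp, zero_comp]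
  · simp

theorem diagonalOperator_comp_adjoint_proj (m : K →L[ℂ] K) (a : ι) :
    diagonalOperator ι m ∘L (PiLp.proj 2 (fun _ : ι => K) a)†
      = (PiLp.proj 2 (fun _ : ι => K) a)† ∘L m := by
  simp only [diagonalOperator, corner_apply, finsetSum_comp, comp_assoc]
  rw [Finset.sum_eq_single a, piLp_proj_comp_adjoint_self, one_def, comp_id]
  · intro b _ hb
    rw [piLp_proj_comp_adjoint_of_ne hb, comp_zero, comp_zero]
  · simp

variable [CompleteSpace H] [CompleteSpace L]

theorem adjoint_rowOperator_comp_rowOperator (S : ι → K →L[ℂ] H) :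
    (rowOperator S)† ∘L rowOperator S = ∑ a, ∑ b, corner b a ((S a)† ∘L S b) := by
  simp only [rowOperator, map_sum, adjoint_comp, finsetSum_comp, comp_finsetSum, corner_apply,
    comp_assoc]
  exact Finset.sum_comm

theorem commute_diagonalOperator_adjoint_rowOperator_comp {S : ι → K →L[ℂ] H} {m : K →L[ℂ] K}
    (hm : ∀ a b, Commute m ((S a)† ∘L S b)) :
    Commute (diagonalOperator ι m) ((rowOperator S)† ∘L rowOperator S) := by
  rw [adjoint_rowOperator_comp_rowOperator]
  refine Commute.sum_right _ _ _ fun a _ => Commute.sum_right _ _ _ fun b _ => ?_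
  generalize hf : (S a)† ∘L S b = f
  have hmf : m ∘L f = f ∘L m := hf ▸ (hm a b).eq
  calc diagonalOperator ι m ∘L corner b a f
      = (PiLp.proj 2 _ a)† ∘L (m ∘L f) ∘L PiLp.proj 2 _ b := by
        rw [corner_apply, ← comp_assoc, diagonalOperator_comp_adjoint_proj, comp_assoc, comp_assoc]
    _ = corner b a f ∘L diagonalOperator ι m := by
        rw [hmf, corner_apply, comp_assoc, comp_assoc, comp_assoc, proj_comp_diagonalOperator]

theorem commute_sqrt {A : Type*} [CStarAlgebra A] [PartialOrder A] [StarOrderedRing A] {a b : A}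
    (h : Commute a b) : Commute a (CFC.sqrt b) :=
  (h.symm.cfcₙ_nnreal _).symm

/-- An operator matrix `x` with `x* x = (S a* S b)`, whose entries commute with every operator that
commutes with the Gram operators `S a* S b`. -/
structure IsGramFactorization (S : ι → K →L[ℂ] H) (x : ι → ι → K →L[ℂ] K) : Prop where
  sum_eq : ∀ a b, ∑ c, (x c a)† ∘L x c b = (S a)† ∘L S b
  commute : ∀ m : K →L[ℂ] K, (∀ a b, Commute m ((S a)† ∘L S b)) → ∀ c a, Commute m (x c a)

theorem exists_isGramFactorization (S : ι → K →L[ℂ] H) : ∃ x, IsGramFactorization S x := by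
  let P (a : ι) := PiLp.proj (𝕜 := ℂ) 2 (fun _ : ι => K) a
  let Q := (rowOperator S)† ∘L rowOperator S
  let q := CFC.sqrt Q
  have Q_nonneg : 0 ≤ Q := (nonneg_iff_isPositive _).2 (isPositive_adjoint_comp_self _)
  have q_sq : q ∘L q = Q := CFC.sqrt_mul_sqrt_self Q Q_nonneg
  have q_adjoint : q† = q := (IsSelfAdjoint.of_nonneg (CFC.sqrt_nonneg Q)).star_eq
  refine ⟨fun c a => P c ∘L q ∘L (P a)†, fun a b => ?_, fun m hm c a => ?_⟩
  · calc ∑ c, (P c ∘L q ∘L (P a)†)† ∘L P c ∘L q ∘L (P b)†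
        = P a ∘L q ∘L (∑ c, (P c)† ∘L P c) ∘L q ∘L (P b)† := by
          simp only [adjoint_comp, adjoint_adjoint, q_adjoint, comp_finsetSum, finsetSum_comp,
            comp_assoc]
      _ = P a ∘L (q ∘L q) ∘L (P b)† := by
          rw [sum_adjoint_piLp_proj_comp_proj, one_def, id_comp, comp_assoc]
      _ = (rowOperator S ∘L (P a)†)† ∘L rowOperator S ∘L (P b)† := by
          rw [q_sq, adjoint_comp, adjoint_adjoint, comp_assoc, comp_assoc]
      _ = (S a)† ∘L S b := by
          rw [rowOperator_comp_adjoint_proj, rowOperator_comp_adjoint_proj]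
  · have hq : diagonalOperator ι m ∘L q = q ∘L diagonalOperator ι m :=
      (commute_sqrt (commute_diagonalOperator_adjoint_rowOperator_comp hm)).eq
    calc m ∘L P c ∘L q ∘L (P a)†
        = P c ∘L (diagonalOperator ι m ∘L q) ∘L (P a)† := by
          rw [← comp_assoc, ← proj_comp_diagonalOperator, comp_assoc, comp_assoc]
      _ = (P c ∘L q ∘L (P a)†) ∘L m := by
          rw [hq, comp_assoc, diagonalOperator_comp_adjoint_proj, comp_assoc, comp_assoc]

theorem IsGramFactorization.sum_adjoint_comp {S : ι → K →L[ℂ] H} {x : ι → ι → K →L[ℂ] K}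
    (hx : IsGramFactorization S x) {M N : K →L[ℂ] L}
    (hMN : ∀ a b, Commute (M† ∘L N) ((S a)† ∘L S b)) (a b : ι) :
    ∑ c, (M ∘L x c a)† ∘L (N ∘L x c b) = (M† ∘L N) ∘L ((S a)† ∘L S b) := by
  have hNM (a b : ι) : Commute ((M† ∘L N)†) ((S a)† ∘L S b) := by
    simpa only [star_eq_adjoint, adjoint_comp, adjoint_adjoint] using (hMN b a).star_star
  have commute_adjoint (c : ι) : (x c a)† ∘L (M† ∘L N) = (M† ∘L N) ∘L (x c a)† := by
    simpa only [star_eq_adjoint, adjoint_adjoint, mul_def] using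
      (hx.commute _ hNM c a).star_star.eq.symm
  calc ∑ c, (M ∘L x c a)† ∘L (N ∘L x c b)
      = ∑ c, ((x c a)† ∘L (M† ∘L N)) ∘L x c b := by simp only [adjoint_comp, comp_assoc]
    _ = (M† ∘L N) ∘L ∑ c, (x c a)† ∘L x c b := by
        simp only [commute_adjoint, comp_finsetSum, comp_assoc]
    _ = (M† ∘L N) ∘L ((S a)† ∘L S b) := by rw [hx.sum_eq]

theorem sum_sum_inner_adjoint_comp (V : ι → K →L[ℂ] H) (k : ι → K) :
    ∑ a, ∑ b, ⟪((V b)† ∘L V a) (k a), k b⟫_ℂ = ((‖∑ a, V a (k a)‖ ^ 2 : ℝ) : ℂ) :=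
  calc ∑ a, ∑ b, ⟪((V b)† ∘L V a) (k a), k b⟫_ℂ = ⟪∑ a, V a (k a), ∑ b, V b (k b)⟫_ℂ := by
        simp only [sum_inner, inner_sum, comp_apply, adjoint_inner_left]
        exact Finset.sum_comm
    _ = ((‖∑ a, V a (k a)‖ ^ 2 : ℝ) : ℂ) := by
        rw [Complex.ofReal_pow]
        exact inner_self_eq_norm_sq_to_K _

namespace IsGramFactorization

variable {S : ι → K →L[ℂ] H} {x : ι → ι → K →L[ℂ] K}

theorem sum_sum_inner_eq (hx : IsGramFactorization S x) {F : ι → K →L[ℂ] L}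
    (hFS : ∀ a b c d, Commute ((F a)† ∘L F b) ((S c)† ∘L S d)) (k : ι → K) :
    ∑ a, ∑ b, ⟪(((F b)† ∘L F a) ∘L ((S b)† ∘L S a)) (k a), k b⟫_ℂ
      = ((∑ c, ‖∑ a, F a (x c a (k a))‖ ^ 2 : ℝ) : ℂ) :=
  calc ∑ a, ∑ b, ⟪(((F b)† ∘L F a) ∘L ((S b)† ∘L S a)) (k a), k b⟫_ℂ
      = ∑ a, ∑ b, ∑ c, ⟪((F b ∘L x c b)† ∘L (F a ∘L x c a)) (k a), k b⟫_ℂ := by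
        simp only [← hx.sum_adjoint_comp (hFS _ _), sum_apply, sum_inner]
    _ = ∑ c, ∑ a, ∑ b, ⟪((F b ∘L x c b)† ∘L (F a ∘L x c a)) (k a), k b⟫_ℂ :=
        (Finset.sum_congr rfl fun _ _ => Finset.sum_comm).trans Finset.sum_comm
    _ = ((∑ c, ‖∑ a, F a (x c a (k a))‖ ^ 2 : ℝ) : ℂ) := by
        rw [Complex.ofReal_sum]
        exact Finset.sum_congr rfl fun c _ => sum_sum_inner_adjoint_comp (fun a => F a ∘L x c a) k

theorem sum_norm_sq_eq (hx : IsGramFactorization S x) (k : ι → K) :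
    ∑ c, ‖∑ a, x c a (k a)‖ ^ 2 = ‖∑ a, S a (k a)‖ ^ 2 := by
  have id_gram : (.id ℂ K : K →L[ℂ] K)† ∘L .id ℂ K = 1 := by rw [adjoint_id, id_comp, one_def]
  have h := hx.sum_sum_inner_eq (F := fun _ => .id ℂ K)
    (fun _ _ _ _ => id_gram ▸ Commute.one_left _) k
  simp only [id_gram, one_def, id_comp, id_apply] at h
  exact_mod_cast h.symm.trans (sum_sum_inner_adjoint_comp S k)

end IsGramFactorization

end GramFactorization

section MinimalExtension

variable {𝕜 K H G E Y : Type*} [RCLike 𝕜]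
  [NormedAddCommGroup K] [InnerProductSpace 𝕜 K] [CompleteSpace K]
  [NormedAddCommGroup H] [InnerProductSpace 𝕜 H] [CompleteSpace H]
  [NormedAddCommGroup G] [InnerProductSpace 𝕜 G]
  [NormedAddCommGroup E] [InnerProductSpace 𝕜 E]

/-- `A` sends `S y k` to `T y k` and vanishes on the orthogonal complement of the ranges of the
operators `S y`, which determines `A`. -/
structure IsMinimalExtension (S : Y → K →L[𝕜] H) (T : Y → K →L[𝕜] G) (A : H →L[𝕜] G) : Prop where
  comp_eq : ∀ y, A ∘L S y = T y
  apply_eq_zero : ∀ h, (∀ y, ((S y)†) h = 0) → A h = 0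

namespace IsMinimalExtension

variable {S : Y → K →L[𝕜] H} {T T' : Y → K →L[𝕜] G} {A A' : H →L[𝕜] G}

theorem add (hA : IsMinimalExtension S T A) (hA' : IsMinimalExtension S T' A') :
    IsMinimalExtension S (T + T') (A + A') where
  comp_eq y := by rw [add_comp, hA.comp_eq, hA'.comp_eq, Pi.add_apply]
  apply_eq_zero h hh := by rw [add_apply, hA.apply_eq_zero h hh, hA'.apply_eq_zero h hh, add_zero]

theorem smul (c : 𝕜) (hA : IsMinimalExtension S T A) : IsMinimalExtension S (c • T) (c • A) where
  comp_eq y := by rw [smul_comp, hA.comp_eq, Pi.smul_apply]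
  apply_eq_zero h hh := by rw [smul_apply, hA.apply_eq_zero h hh, smul_zero]

theorem comp_left (D : G →L[𝕜] E) (hA : IsMinimalExtension S T A) :
    IsMinimalExtension S (fun y => D ∘L T y) (D ∘L A) where
  comp_eq y := by rw [comp_assoc, hA.comp_eq]
  apply_eq_zero h hh := by rw [comp_apply, hA.apply_eq_zero h hh, map_zero]

theorem of_comp_adjoint (S : Y → K →L[𝕜] H) (D : K →L[𝕜] G) (y : Y) :
    IsMinimalExtension S (fun y' => D ∘L (S y)† ∘L S y') (D ∘L (S y)†) where
  comp_eq y' := comp_assoc _ _ _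
  apply_eq_zero h hh := by rw [comp_apply, hh, map_zero]

theorem eq_zero [CompleteSpace G] (hA : IsMinimalExtension S (0 : Y → K →L[𝕜] G) A) : A = 0 := by
  have range_adjoint (g : G) : A ((A†) g) = 0 := hA.apply_eq_zero _ fun y => by
    rw [← comp_apply, ← adjoint_comp, hA.comp_eq, Pi.zero_apply, map_zero, zero_apply]
  have adjoint_eq_zero : A† = 0 := by
    ext g
    exact inner_self_eq_zero (𝕜 := 𝕜).1 <| by
      rw [adjoint_inner_left, range_adjoint, inner_zero_right]
  exact (LinearIsometryEquiv.map_eq_zero_iff _).1 adjoint_eq_zero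

theorem unique [CompleteSpace G] (hA : IsMinimalExtension S T A)
    (hA' : IsMinimalExtension S T A') : A = A' := by
  have h := hA.add (hA'.smul (-1))
  rw [neg_one_smul, neg_one_smul, add_neg_cancel] at h
  exact add_neg_eq_zero.1 h.eq_zero

end IsMinimalExtension

theorem exists_isMinimalExtension [CompleteSpace G] {S : Y → K →L[𝕜] H} {T : Y → K →L[𝕜] G} (C : ℝ)
    (hC : ∀ (s : Finset Y) (k : Y → K), ‖∑ y ∈ s, T y (k y)‖ ≤ C * ‖∑ y ∈ s, S y (k y)‖) :
    ∃ A, IsMinimalExtension S T A := by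
  classical
  let sumS : (Y →₀ K) →ₗ[𝕜] H := Finsupp.lsum 𝕜 fun y => (S y : K →ₗ[𝕜] H)
  let sumT : (Y →₀ K) →ₗ[𝕜] G := Finsupp.lsum 𝕜 fun y => (T y : K →ₗ[𝕜] G)
  let W : Submodule 𝕜 H := (LinearMap.range sumS).topologicalClosure
  let e : (Y →₀ K) →ₗ[𝕜] W :=
    sumS.codRestrict W fun f => Submodule.le_topologicalClosure _ ⟨f, rfl⟩
  have e_dense : DenseRange e := by
    have h := (denseRange_inclusion_iff (s := Set.range sumS) (t := W) subset_closure).2 subset_rfl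
    exact h.comp Set.rangeFactorization_surjective.denseRange (by fun_prop)
  have sumT_le (f : Y →₀ K) : ‖sumT f‖ ≤ C * ‖e f‖ := hC f.support f
  have : CompleteSpace W := (Submodule.isClosed_topologicalClosure _).completeSpace_coe
  refine ⟨sumT.extendOfNorm e ∘L W.orthogonalProjectionOnto, fun y => ?_, fun h hh => ?_⟩
  · ext k
    have S_eq : S y k = (e (Finsupp.single y k) : H) := by simp [e, sumS]
    rw [comp_apply, comp_apply, S_eq, Submodule.orthogonalProjectionOnto_mem_subspace_eq_self,
      LinearMap.extendOfNorm_eq e_dense ⟨C, sumT_le⟩]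
    simp [sumT]
  · suffices h_mem : h ∈ Wᗮ by
      rw [comp_apply, Submodule.orthogonalProjectionOnto_eq_zero_iff.2 h_mem, map_zero]
    rw [Submodule.orthogonal_closure, Submodule.mem_orthogonal]
    rintro _ ⟨f, rfl⟩
    simp only [sumS, Finsupp.lsum_apply, Finsupp.sum, sum_inner]
    exact Finset.sum_eq_zero fun y _ => by
      rw [coe_coe, ← adjoint_inner_right, hh, inner_zero_right]

end MinimalExtension

section GramTensor

variable {K L H G E X Y : Type*}
  [NormedAddCommGroup K] [InnerProductSpace ℂ K] [CompleteSpace K]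
  [NormedAddCommGroup L] [InnerProductSpace ℂ L] [CompleteSpace L]
  [NormedAddCommGroup H] [InnerProductSpace ℂ H] [CompleteSpace H]
  [NormedAddCommGroup G] [InnerProductSpace ℂ G] [CompleteSpace G]
  [NormedAddCommGroup E] [InnerProductSpace ℂ E]

theorem norm_sum_le_of_gram_eq {ι : Type*} [Fintype ι] {f : K →L[ℂ] L} {S : ι → K →L[ℂ] H}
    {V : ι → K →L[ℂ] G} (hfS : ∀ a b, Commute (f† ∘L f) ((S a)† ∘L S b))
    (hV : ∀ a b, (V a)† ∘L V b = (f† ∘L f) ∘L ((S a)† ∘L S b)) (k : ι → K) :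
    ‖∑ a, V a (k a)‖ ≤ ‖f‖ * ‖∑ a, S a (k a)‖ := by
  obtain ⟨x, hx⟩ := exists_isGramFactorization S
  have norm_sq_eq : ‖∑ a, V a (k a)‖ ^ 2 = ∑ c, ‖∑ a, f (x c a (k a))‖ ^ 2 := by
    have h := sum_sum_inner_adjoint_comp V k
    simp only [hV] at h
    exact_mod_cast h.symm.trans
      (hx.sum_sum_inner_eq (F := fun _ => f) (fun _ _ => hfS) k)
  refine le_of_sq_le_sq ?_ (by positivity)
  calc ‖∑ a, V a (k a)‖ ^ 2
      = ∑ c, ‖f (∑ a, x c a (k a))‖ ^ 2 := by simp only [norm_sq_eq, map_sum]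
    _ ≤ ∑ c, (‖f‖ * ‖∑ a, x c a (k a)‖) ^ 2 := by gcongr; exact f.le_opNorm _
    _ = (‖f‖ * ‖∑ a, S a (k a)‖) ^ 2 := by
        simp only [mul_pow, ← Finset.mul_sum, hx.sum_norm_sq_eq]

/-- The operators `T x y` span `G` and have the Gram operators of the tensors `F x ⊗ S y`, taken
over the algebras generated by the commuting Gram operators of `F` and of `S`. -/
structure IsGramTensor (F : X → K →L[ℂ] L) (S : Y → K →L[ℂ] H) (T : X → Y → K →L[ℂ] G) :
    Prop where
  gram : ∀ x y x' y',
    (T x y)† ∘L T x' y' = ((F x)† ∘L F x') ∘L ((S y)† ∘L S y')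
  total : ∀ g, (∀ x y, ((T x y)†) g = 0) → g = 0

theorem re_sum_sum_inner_nonneg {ι : Type*} {F : ι → K →L[ℂ] L} {S : ι → K →L[ℂ] H}
    (hFS : ∀ a b c d, Commute ((F a)† ∘L F b) ((S c)† ∘L S d)) (s : Finset ι) (k : ι → K) :
    0 ≤ (∑ a ∈ s, ∑ b ∈ s, ⟪(((F b)† ∘L F a) ∘L ((S b)† ∘L S a)) (k a), k b⟫_ℂ).re := by
  obtain ⟨x, hx⟩ := exists_isGramFactorization fun a : s => S a
  have h := hx.sum_sum_inner_eq (F := fun a : s => F a) (fun _ _ _ _ => hFS _ _ _ _) fun a => k a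
  simp only [← Finset.sum_coe_sort s, h, Complex.ofReal_re]
  positivity

/-- The kernel `((x, y), (x', y')) ↦ F x* F x' S y* S y'` whose reproducing kernel Hilbert space
carries the Gram tensor of `F` and `S`. -/
noncomputable def gramKernel (F : X → K →L[ℂ] L) (S : Y → K →L[ℂ] H) :
    Matrix (X × Y) (X × Y) (K →L[ℂ] K) :=
  .of fun p q => ((F p.1)† ∘L F q.1) ∘L ((S p.2)† ∘L S q.2)

theorem posSemidef_gramKernel {F : X → K →L[ℂ] L} {S : Y → K →L[ℂ] H}
    (hFS : ∀ a b c d, Commute ((F a)† ∘L F b) ((S c)† ∘L S d)) :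
    (gramKernel F S).PosSemidef := by
  have positivity_iff := (RKHS.posSemidef_tfae (K := gramKernel F S)).out 0 2
  refine positivity_iff.2 ⟨?_, fun k => ?_⟩
  · ext1 p q
    simp only [gramKernel, Matrix.conjTranspose_apply, Matrix.of_apply, star_eq_adjoint,
      adjoint_comp, adjoint_adjoint]
    exact (hFS _ _ _ _).eq.symm
  · exact re_sum_sum_inner_nonneg (F := fun p : X × Y => F p.1) (S := fun p => S p.2)
      (fun _ _ _ _ => hFS _ _ _ _) k.support k

theorem exists_isGramTensor.{v₁, v₂, v₃} {K : Type v₁} [NormedAddCommGroup K]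
    [InnerProductSpace ℂ K] [CompleteSpace K] {X : Type v₂} {Y : Type v₃} {F : X → K →L[ℂ] L}
    {S : Y → K →L[ℂ] H} (hFS : ∀ a b c d, Commute ((F a)† ∘L F b) ((S c)† ∘L S d)) :
    ∃ (G : HilbertC.{max v₁ v₂ v₃}) (T : X → Y → K →L[ℂ] G.carrier), IsGramTensor F S T := by
  have : Fact (gramKernel F S).PosSemidef := ⟨posSemidef_gramKernel hFS⟩
  refine ⟨⟨RKHS.OfKernel (gramKernel F S)⟩,
    fun x y => RKHS.kerFun (RKHS.OfKernel (gramKernel F S)) (x, y),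
    fun x y x' y' => ?_, fun g hg => RKHS.ext fun p => ?_⟩
  · rw [← RKHS.kernel_apply, RKHS.OfKernel.kernel_ofKernel]
    rfl
  · rw [← RKHS.adjoint_kerFun]
    simpa using hg p.1 p.2

namespace IsGramTensor

variable {F : X → K →L[ℂ] L} {S : Y → K →L[ℂ] H} {T : X → Y → K →L[ℂ] G}

theorem commute (hT : IsGramTensor F S T) (a b : X) (c d : Y) :
    Commute ((F a)† ∘L F b) ((S c)† ∘L S d) := by
  have h := congrArg adjoint (hT.gram b d a c)
  simp only [adjoint_comp, adjoint_adjoint] at h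
  exact (hT.gram a c b d).symm.trans h

theorem swap (hT : IsGramTensor F S T) : IsGramTensor S F (Function.swap T) where
  gram y x y' x' := (hT.gram x y x' y').trans (hT.commute x x' y y').eq
  total g hg := hT.total g fun x y => hg y x

theorem ext (hT : IsGramTensor F S T) {f g : E →L[ℂ] G}
    (h : ∀ x y, (T x y)† ∘L f = (T x y)† ∘L g) : f = g := by
  ext1 k
  refine sub_eq_zero.1 (hT.total _ fun x y => ?_)
  rw [map_sub, sub_eq_zero]
  exact congr($(h x y) k)

theorem exists_isMinimalExtension (hT : IsGramTensor F S T) (x : X) :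
    ∃ A, IsMinimalExtension S (T x) A := by
  refine _root_.exists_isMinimalExtension ‖F x‖ fun s k => ?_
  have h := norm_sum_le_of_gram_eq (f := F x) (S := fun y : s => S y) (V := fun y : s => T x y)
    (fun a b => hT.commute _ _ _ _) (fun a b => hT.gram _ _ _ _) fun y => k y
  rwa [Finset.sum_coe_sort s fun y => T x y (k y), Finset.sum_coe_sort s fun y => S y (k y)] at h

theorem adjoint_comp_eq (hT : IsGramTensor F S T) {A : H →L[ℂ] G} {x : X}
    (hA : IsMinimalExtension S (T x) A) (x' : X) (y : Y) :
    A† ∘L T x' y = S y ∘L (F x)† ∘L F x' := by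
  have h : (T x' y)† ∘L A = ((F x')† ∘L F x) ∘L (S y)† := by
    refine (hA.comp_left ((T x' y)†)).unique ?_
    simp only [hT.gram]
    exact .of_comp_adjoint S ((F x')† ∘L F x) y
  simpa only [adjoint_comp, adjoint_adjoint] using congrArg adjoint h

theorem eq_comp_adjoint_comp (hT : IsGramTensor F S T) {A : X → H →L[ℂ] G}
    (hA : ∀ x, IsMinimalExtension S (T x) (A x)) {w s t r : X}
    (hw : F w = F s ∘L (F t)† ∘L F r) : A w = A s ∘L (A t)† ∘L A r := by
  have T_eq (y : Y) : T w y = T s y ∘L (F t)† ∘L F r := hT.ext fun x' y' => by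
    have h := (hT.commute t r y' y).eq
    calc (T x' y')† ∘L T w y
        = ((F x')† ∘L F s) ∘L (((F t)† ∘L F r) * ((S y')† ∘L S y)) := by
          rw [hT.gram, hw]; rfl
      _ = (T x' y')† ∘L T s y ∘L (F t)† ∘L F r := by
          rw [h, ← comp_assoc, hT.gram]; rfl
  refine (hA w).unique ?_
  have h := (hA r).comp_left (A s ∘L (A t)†)
  simp only [comp_assoc, hT.adjoint_comp_eq (hA t)] at h
  simp only [← comp_assoc, (hA s).comp_eq] at h
  simpa only [comp_assoc, ← T_eq] using h

theorem comp_adjoint_eq (hT : IsGramTensor F S T) {x : X} {y : Y} {A : H →L[ℂ] G} {C : L →L[ℂ] G}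
    (hA : IsMinimalExtension S (T x) A) (hC : IsMinimalExtension F (fun x => T x y) C) :
    F x ∘L (S y)† = C† ∘L A := by
  refine (IsMinimalExtension.of_comp_adjoint S (F x) y).unique ?_
  simpa only [hT.swap.adjoint_comp_eq hC] using hA.comp_left (C†)

end IsGramTensor

theorem IsGramTensor.exists_semilinear [AddCommMonoid X] [Module ℂ X] {σ : ℂ →+* ℂ}
    {F : X →ₛₗ[σ] (K →L[ℂ] L)} {S : Y → K →L[ℂ] H} {T : X → Y → K →L[ℂ] G}
    (hT : IsGramTensor F S T) :
    ∃ A : X →ₛₗ[σ] (H →L[ℂ] G), ∀ x, IsMinimalExtension S (T x) (A x) := by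
  choose A hA using hT.exists_isMinimalExtension
  have T_add (x x' : X) : T (x + x') = T x + T x' := funext fun y => hT.ext fun p q => by
    rw [Pi.add_apply, comp_add, hT.gram, hT.gram, hT.gram, map_add, comp_add, add_comp]
  have T_smul (c : ℂ) (x : X) : T (c • x) = σ c • T x := funext fun y => hT.ext fun p q => by
    rw [Pi.smul_apply, comp_smul, hT.gram, hT.gram, map_smulₛₗ, comp_smul, smul_comp]
  exact ⟨{
    toFun := A
    map_add' := fun x x' => (T_add x x' ▸ hA (x + x')).unique ((hA x).add (hA x'))
    map_smul' := fun c x => (T_smul c x ▸ hA (c • x)).unique ((hA x).smul (σ c)) }, hA⟩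

end GramTensor

section Square

variable {H K L G X Y : Type*}
  [NormedAddCommGroup H] [InnerProductSpace ℂ H] [CompleteSpace H]
  [NormedAddCommGroup K] [InnerProductSpace ℂ K] [CompleteSpace K]
  [NormedAddCommGroup L] [InnerProductSpace ℂ L] [CompleteSpace L]
  [NormedAddCommGroup G] [InnerProductSpace ℂ G] [CompleteSpace G]

/-- The families `ψ y : H → K`, `φ x : K → L` and `A x : H → G`, `B y : G → L` form a square that
commutes and still commutes after its horizontal arrows `ψ y`, `B y` are replaced by adjoints. -/
structure IsDoublyCommutingSquare (φ : X → K →L[ℂ] L) (ψ : Y → H →L[ℂ] K) (A : X → H →L[ℂ] G)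
    (B : Y → G →L[ℂ] L) : Prop where
  comp_eq : ∀ x y, φ x ∘L ψ y = B y ∘L A x
  comp_adjoint_eq : ∀ x y, A x ∘L (ψ y)† = (B y)† ∘L φ x

theorem exists_isDoublyCommutingSquare
    {K₁ L₁ H₂ K₂ K : Type u}
    [NormedAddCommGroup K₁] [InnerProductSpace ℂ K₁] [CompleteSpace K₁]
    [NormedAddCommGroup L₁] [InnerProductSpace ℂ L₁] [CompleteSpace L₁]
    [NormedAddCommGroup H₂] [InnerProductSpace ℂ H₂] [CompleteSpace H₂]
    [NormedAddCommGroup K₂] [InnerProductSpace ℂ K₂] [CompleteSpace K₂]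
    [NormedAddCommGroup K] [InnerProductSpace ℂ K] [CompleteSpace K]
    {𝒰 : Submodule ℂ (K₁ →L[ℂ] L₁)} {𝒱 : Submodule ℂ (H₂ →L[ℂ] K₂)}
    {φ : 𝒰 →ₗ[ℂ] (K →L[ℂ] L)} {ψ : 𝒱 →ₗ[ℂ] (H →L[ℂ] K)}
    (hφ : IsTernaryHom 𝒰 φ) (hψ : IsTernaryHom 𝒱 ψ)
    (hφψ : ∀ u₁ u₂ v₁ v₂, Commute ((φ u₁)† ∘L φ u₂) (ψ v₁ ∘L (ψ v₂)†)) :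
    ∃ (G : HilbertC.{u}) (A : 𝒰 →ₗ[ℂ] (H →L[ℂ] G.carrier)) (B : 𝒱 →ₗ[ℂ] (G.carrier →L[ℂ] L)),
      IsTernaryHom 𝒰 A ∧ IsTernaryHom 𝒱 B ∧ IsDoublyCommutingSquare φ ψ A B := by
  let S : 𝒱 →ₗ⋆[ℂ] (K →L[ℂ] H) := (adjoint (𝕜 := ℂ)).toLinearEquiv.toLinearMap ∘ₛₗ ψ
  have adjoint_S (v : 𝒱) : (S v)† = ψ v := adjoint_adjoint _
  obtain ⟨G, T, hT⟩ := exists_isGramTensor (F := φ) (S := S) fun u₁ u₂ v₁ v₂ => by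
    rw [adjoint_S]
    exact hφψ u₁ u₂ v₁ v₂
  obtain ⟨A, hA⟩ := hT.exists_semilinear
  obtain ⟨C, hC⟩ := hT.swap.exists_semilinear
  let B : 𝒱 →ₗ[ℂ] (G.carrier →L[ℂ] L) := (adjoint (𝕜 := ℂ)).toLinearEquiv.toLinearMap ∘ₛₗ C
  have adjoint_B (v : 𝒱) : (B v)† = C v := adjoint_adjoint _
  refine ⟨G, A, B, fun s t r h => hT.eq_comp_adjoint_comp hA (hφ s t r h), fun s t r h => ?_,
    fun u v => ?_, fun u v => ?_⟩
  · have S_eq : S ⟨_, h⟩ = S r ∘L (S t)† ∘L S s :=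
      (congrArg adjoint (hψ s t r h)).trans <| by
        rw [adjoint_S, adjoint_comp, adjoint_comp, adjoint_adjoint, comp_assoc]
        rfl
    refine (congrArg adjoint (hT.swap.eq_comp_adjoint_comp hC S_eq)).trans ?_
    rw [adjoint_B, adjoint_comp, adjoint_comp, adjoint_adjoint, comp_assoc]
    rfl
  · rw [← adjoint_S]
    exact hT.comp_adjoint_eq (hA u) (hC v)
  · rw [adjoint_B]
    exact ((hA u).comp_eq v).trans ((hC v).comp_eq u).symm

end Square

section CommutingPair

variable {K₀ L₀ : Type*}
  [NormedAddCommGroup K₀] [InnerProductSpace ℂ K₀] [CompleteSpace K₀]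
  [NormedAddCommGroup L₀] [InnerProductSpace ℂ L₀] [CompleteSpace L₀]

theorem IsTernaryHom.corner_add_corner {ι : Type*} [Fintype ι] {E : ι → Type*}
    [∀ i, NormedAddCommGroup (E i)] [∀ i, InnerProductSpace ℂ (E i)] [∀ i, CompleteSpace (E i)]
    {𝒰 : Submodule ℂ (K₀ →L[ℂ] L₀)} {a b c d : ι}
    {α : 𝒰 →ₗ[ℂ] (E a →L[ℂ] E b)} {β : 𝒰 →ₗ[ℂ] (E c →L[ℂ] E d)}
    (hα : IsTernaryHom 𝒰 α) (hβ : IsTernaryHom 𝒰 β) (hac : a ≠ c) (hbd : b ≠ d) :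
    IsTernaryHom 𝒰 (corner a b ∘ₗ α + corner c d ∘ₗ β) := by
  intro s t r h
  simp only [LinearMap.add_apply, LinearMap.comp_apply, map_add, adjoint_corner, add_comp, comp_add,
    corner_comp_corner, corner_comp_corner_of_ne hac, corner_comp_corner_of_ne hac.symm,
    corner_comp_corner_of_ne hbd, corner_comp_corner_of_ne hbd.symm, add_zero, zero_add,
    hα s t r h, hβ s t r h]

variable {E : Fin 4 → Type*} [∀ i, NormedAddCommGroup (E i)] [∀ i, InnerProductSpace ℂ (E i)]
  [∀ i, CompleteSpace (E i)] {X Y : Type*} [AddCommMonoid X] [Module ℂ X] [AddCommMonoid Y]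
  [Module ℂ Y]

/-- `φ ⊕ A` as operators on the Hilbert sum of the four corners `E 0 = H`, `E 1 = K`, `E 2 = L`,
`E 3 = G` of a square. -/
noncomputable def verticalSum (φ : X →ₗ[ℂ] (E 1 →L[ℂ] E 2)) (A : X →ₗ[ℂ] (E 0 →L[ℂ] E 3)) :
    X →ₗ[ℂ] (PiLp 2 E →L[ℂ] PiLp 2 E) :=
  corner 1 2 ∘ₗ φ + corner 0 3 ∘ₗ A

/-- `ψ ⊕ B` as operators on the Hilbert sum of the four corners of a square, indexed as in
`verticalSum`. -/
noncomputable def horizontalSum (ψ : Y →ₗ[ℂ] (E 0 →L[ℂ] E 1)) (B : Y →ₗ[ℂ] (E 3 →L[ℂ] E 2)) :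
    Y →ₗ[ℂ] (PiLp 2 E →L[ℂ] PiLp 2 E) :=
  corner 0 1 ∘ₗ ψ + corner 3 2 ∘ₗ B

theorem verticalSum_mul_horizontalSum (φ : X →ₗ[ℂ] (E 1 →L[ℂ] E 2)) (A : X →ₗ[ℂ] (E 0 →L[ℂ] E 3))
    (ψ : Y →ₗ[ℂ] (E 0 →L[ℂ] E 1)) (B : Y →ₗ[ℂ] (E 3 →L[ℂ] E 2)) (x : X) (y : Y) :
    verticalSum φ A x * horizontalSum ψ B y = corner 0 2 (φ x ∘L ψ y) := by
  simp [verticalSum, horizontalSum, mul_def, comp_add, add_comp, corner_comp_corner,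
    corner_comp_corner_of_ne]

theorem norm_sum_verticalSum_mul_horizontalSum {ι : Type*} [Fintype ι]
    (φ : X →ₗ[ℂ] (E 1 →L[ℂ] E 2)) (A : X →ₗ[ℂ] (E 0 →L[ℂ] E 3)) (ψ : Y →ₗ[ℂ] (E 0 →L[ℂ] E 1))
    (B : Y →ₗ[ℂ] (E 3 →L[ℂ] E 2)) (x : ι → X) (y : ι → Y) :
    ‖∑ i, verticalSum φ A (x i) * horizontalSum ψ B (y i)‖ = ‖∑ i, φ (x i) ∘L ψ (y i)‖ := by
  simp only [verticalSum_mul_horizontalSum, ← map_sum, norm_corner]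

namespace IsDoublyCommutingSquare

variable {φ : X →ₗ[ℂ] (E 1 →L[ℂ] E 2)} {A : X →ₗ[ℂ] (E 0 →L[ℂ] E 3)}
  {ψ : Y →ₗ[ℂ] (E 0 →L[ℂ] E 1)} {B : Y →ₗ[ℂ] (E 3 →L[ℂ] E 2)}

theorem commute_verticalSum_horizontalSum (h : IsDoublyCommutingSquare φ ψ A B) (x : X) (y : Y) :
    Commute (verticalSum φ A x) (horizontalSum ψ B y) := by
  rw [commute_iff_eq, verticalSum_mul_horizontalSum, h.comp_eq]
  simp [verticalSum, horizontalSum, mul_def, comp_add, add_comp, corner_comp_corner,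
    corner_comp_corner_of_ne]

theorem commute_verticalSum_adjoint_horizontalSum (h : IsDoublyCommutingSquare φ ψ A B) (x : X)
    (y : Y) : Commute (verticalSum φ A x) ((horizontalSum ψ B y)†) := by
  simp [commute_iff_eq, verticalSum, horizontalSum, mul_def, comp_add, add_comp, adjoint_corner,
    corner_comp_corner, corner_comp_corner_of_ne, h.comp_adjoint_eq]

end IsDoublyCommutingSquare

theorem commute_star_mul_mul_star {A : Type*} [Monoid A] [StarMul A] {a b c d : A}
    (hac : Commute a (star c)) (had : Commute a d) (hbc : Commute b c) (hbd : Commute b (star d)) :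
    Commute (star a * b) (c * star d) :=
  have hac' : Commute (star a) c := by simpa using hac.star_star
  (hac'.mul_right had.star_star).mul_left (hbc.mul_right hbd)

end CommutingPair

section Main

variable {K₁ L₁ H₂ K₂ : Type u}
  [NormedAddCommGroup K₁] [InnerProductSpace ℂ K₁] [CompleteSpace K₁]
  [NormedAddCommGroup L₁] [InnerProductSpace ℂ L₁] [CompleteSpace L₁]
  [NormedAddCommGroup H₂] [InnerProductSpace ℂ H₂] [CompleteSpace H₂]
  [NormedAddCommGroup K₂] [InnerProductSpace ℂ K₂] [CompleteSpace K₂]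
  {𝒰 : Submodule ℂ (K₁ →L[ℂ] L₁)} {𝒱 : Submodule ℂ (H₂ →L[ℂ] K₂)} {ι : Type*} [Fintype ι]

theorem IsDoublyCommutingSquare.exists_commuting_pair (E : Fin 4 → HilbertC.{u})
    {φ : 𝒰 →ₗ[ℂ] ((E 1).carrier →L[ℂ] (E 2).carrier)}
    {A : 𝒰 →ₗ[ℂ] ((E 0).carrier →L[ℂ] (E 3).carrier)}
    {ψ : 𝒱 →ₗ[ℂ] ((E 0).carrier →L[ℂ] (E 1).carrier)}
    {B : 𝒱 →ₗ[ℂ] ((E 3).carrier →L[ℂ] (E 2).carrier)}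
    (h : IsDoublyCommutingSquare φ ψ A B) (hφ : IsTernaryHom 𝒰 φ) (hA : IsTernaryHom 𝒰 A)
    (hψ : IsTernaryHom 𝒱 ψ) (hB : IsTernaryHom 𝒱 B) (u : ι → 𝒰) (v : ι → 𝒱) :
    ∃ (P : HilbertC.{u}) (φ' : 𝒰 →ₗ[ℂ] (P.carrier →L[ℂ] P.carrier))
      (ψ' : 𝒱 →ₗ[ℂ] (P.carrier →L[ℂ] P.carrier)),
      IsTernaryHom 𝒰 φ' ∧ IsTernaryHom 𝒱 ψ' ∧ (∀ a b, Commute (φ' a) (ψ' b)) ∧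
      (∀ a b, Commute (φ' a) ((ψ' b)†)) ∧
      ‖∑ i, φ (u i) ∘L ψ (v i)‖ = ‖∑ i, φ' (u i) * ψ' (v i)‖ :=
  let E' (i : Fin 4) : Type u := (E i).carrier
  ⟨⟨PiLp 2 E'⟩, verticalSum (E := E') φ A, horizontalSum (E := E') ψ B,
    hφ.corner_add_corner (E := E') hA (by decide) (by decide),
    hψ.corner_add_corner (E := E') hB (by decide) (by decide),
    h.commute_verticalSum_horizontalSum (E := E'),
    h.commute_verticalSum_adjoint_horizontalSum (E := E'),
    (norm_sum_verticalSum_mul_horizontalSum (E := E') φ A ψ B u v).symm⟩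

theorem statement5_general (𝒰 : Submodule ℂ (K₁ →L[ℂ] L₁)) (𝒱 : Submodule ℂ (H₂ →L[ℂ] K₂))
    (u : ι → 𝒰) (v : ι → 𝒱) :
    {r : ℝ | ∃ (ℍ 𝕂 𝕃 : HilbertC.{u})
        (φ : ↥𝒰 →ₗ[ℂ] (𝕂.carrier →L[ℂ] 𝕃.carrier))
        (ψ : ↥𝒱 →ₗ[ℂ] (ℍ.carrier →L[ℂ] 𝕂.carrier)),
        IsTernaryHom 𝒰 φ ∧ IsTernaryHom 𝒱 ψ ∧
        (∀ (u₁ u₂ : 𝒰) (v₁ v₂ : 𝒱),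
          Commute ((adjoint (φ u₁)) ∘L (φ u₂)) ((ψ v₁) ∘L (adjoint (ψ v₂)))) ∧
        r = ‖∑ i, (φ (u i)) ∘L (ψ (v i))‖}
    = {r : ℝ | ∃ (ℍ : HilbertC.{u})
        (φ' : ↥𝒰 →ₗ[ℂ] (ℍ.carrier →L[ℂ] ℍ.carrier))
        (ψ' : ↥𝒱 →ₗ[ℂ] (ℍ.carrier →L[ℂ] ℍ.carrier)),
        IsTernaryHom 𝒰 φ' ∧ IsTernaryHom 𝒱 ψ' ∧
        (∀ (a : 𝒰) (b : 𝒱), Commute (φ' a) (ψ' b)) ∧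
        (∀ (a : 𝒰) (b : 𝒱), Commute (φ' a) (adjoint (ψ' b))) ∧
        r = ‖∑ i, (φ' (u i)) * (ψ' (v i))‖} := by
  refine Set.Subset.antisymm ?_ ?_
  · rintro _ ⟨ℍ, 𝕂, 𝕃, φ, ψ, hφ, hψ, semicommute, rfl⟩
    obtain ⟨𝔾, A, B, hA, hB, square⟩ := exists_isDoublyCommutingSquare hφ hψ semicommute
    exact IsDoublyCommutingSquare.exists_commuting_pair ![ℍ, 𝕂, 𝕃, 𝔾] square hφ hA hψ hB u v
  · rintro _ ⟨ℍ, φ, ψ, hφ, hψ, commute, commute_adjoint, rfl⟩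
    exact ⟨ℍ, ℍ, ℍ, φ, ψ, hφ, hψ, fun u₁ u₂ v₁ v₂ =>
      commute_star_mul_mul_star (commute_adjoint u₁ v₁) (commute u₁ v₂) (commute u₂ v₁)
        (commute_adjoint u₂ v₂), rfl⟩

end Main

/-- The maximal tensor norm of TROs defined via semi-commuting pairs
of ternary morphisms coincides with the one defined via commuting pairs. -/
theorem statement5
    {K₁ L₁ H₂ K₂ : Type u}
    [NormedAddCommGroup K₁] [InnerProductSpace ℂ K₁] [CompleteSpace K₁]
    [NormedAddCommGroup L₁] [InnerProductSpace ℂ L₁] [CompleteSpace L₁]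
    [NormedAddCommGroup H₂] [InnerProductSpace ℂ H₂] [CompleteSpace H₂]
    [NormedAddCommGroup K₂] [InnerProductSpace ℂ K₂] [CompleteSpace K₂]
    (𝒰 : Submodule ℂ (K₁ →L[ℂ] L₁)) (𝒱 : Submodule ℂ (H₂ →L[ℂ] K₂))
    (h𝒰closed : IsClosed (𝒰 : Set (K₁ →L[ℂ] L₁)))
    (h𝒱closed : IsClosed (𝒱 : Set (H₂ →L[ℂ] K₂)))
    (h𝒰tro : ∀ S ∈ 𝒰, ∀ T ∈ 𝒰, ∀ R ∈ 𝒰, S ∘L (adjoint T) ∘L R ∈ 𝒰)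
    (h𝒱tro : ∀ S ∈ 𝒱, ∀ T ∈ 𝒱, ∀ R ∈ 𝒱, S ∘L (adjoint T) ∘L R ∈ 𝒱)
    (n : ℕ) (u : Fin n → 𝒰) (v : Fin n → 𝒱) :
    sSup {r : ℝ | ∃ (ℍ 𝕂 𝕃 : HilbertC.{u})
        (φ : ↥𝒰 →ₗ[ℂ] (𝕂.carrier →L[ℂ] 𝕃.carrier))
        (ψ : ↥𝒱 →ₗ[ℂ] (ℍ.carrier →L[ℂ] 𝕂.carrier)),
        IsTernaryHom 𝒰 φ ∧ IsTernaryHom 𝒱 ψ ∧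
        (∀ (u₁ u₂ : 𝒰) (v₁ v₂ : 𝒱),
          Commute ((adjoint (φ u₁)) ∘L (φ u₂)) ((ψ v₁) ∘L (adjoint (ψ v₂)))) ∧
        r = ‖∑ i, (φ (u i)) ∘L (ψ (v i))‖}
    = sSup {r : ℝ | ∃ (ℍ : HilbertC.{u})
        (φ' : ↥𝒰 →ₗ[ℂ] (ℍ.carrier →L[ℂ] ℍ.carrier))
        (ψ' : ↥𝒱 →ₗ[ℂ] (ℍ.carrier →L[ℂ] ℍ.carrier)),
        IsTernaryHom 𝒰 φ' ∧ IsTernaryHom 𝒱 ψ' ∧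
        (∀ (a : 𝒰) (b : 𝒱), Commute (φ' a) (ψ' b)) ∧
        (∀ (a : 𝒰) (b : 𝒱), Commute (φ' a) (adjoint (ψ' b))) ∧
        r = ‖∑ i, (φ' (u i)) * (ψ' (v i))‖} :=
  congrArg sSup (statement5_general 𝒰 𝒱 u v)
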